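/- Let f be a quasiperiodically forced circle homeomorphism over an irrational ω with lift F whose fibered rotation number is ρ. Suppose the fibered rotation number is locked on one side: for some ε ≠ 0 the perturbed lift F_ε has fibered rotation number equal to ρ. Then ω, ρ and 1 are rationally dependent: there exists (a,b,c) ∈ ℤ³ \ {(0,0,0)} with aω + bρ + c = 0. -/

import Mathlib

open Filter Topology MeasureTheory
open scoped ENNReal

noncomputable section

/-- The circle `T¹ = ℝ/ℤ`. -/
abbrev T1 := AddCircle (1 : ℝ)

/-- Fiberwise iterate of the skew product: `fiberIter ω F n θ x = F^n_θ(x)`. -/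
def fiberIter (ω : ℝ) (F : T1 → ℝ → ℝ) : ℕ → T1 → ℝ → ℝ
  | 0, _, x => x
  | n + 1, θ, x => fiberIter ω F n (θ + (ω : T1)) (F θ x)

/-- `F` is (the fiber part of) a lift of a quasiperiodically forced circle homeomorphism
over `ω`: `F(θ,x) = (θ+ω, F_θ(x))`, each `F_θ` a strictly increasing homeomorphism of `ℝ`
commuting with `x ↦ x+1`. -/
structure IsQpfLift (ω : ℝ) (F : T1 → ℝ → ℝ) : Prop where
  cont : Continuous fun p : T1 × ℝ => F p.1 p.2
  mono : ∀ θ, StrictMono (F θ)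
  surj : ∀ θ, Function.Surjective (F θ)
  per  : ∀ θ x, F θ (x + 1) = F θ x + 1

/-- `ρ` is the fibered rotation number of the lift `F`. -/
def HasRotNum (ω : ℝ) (F : T1 → ℝ → ℝ) (ρ : ℝ) : Prop :=
  ∀ θ x, Tendsto (fun n : ℕ => (fiberIter ω F n θ x - x) / n) atTop (𝓝 ρ)

/-!
Suppose that `ω`, `ρ` and `1` are rationally independent. Then the rotation by `(ω, ρ)` is minimal
on the two-torus, by uniqueness of Fourier series.

Let `F` and `F + ε`, with `ε > 0`, have the same rotation number `ρ`. For `0 < s < ε` the deviations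
of `F + s` from uniform rotation are then bounded below: they are so on a single orbit of `F`, and
minimality of the base spreads this bound to every orbit of `F + s`. Hence
`h θ x = inf_n ((F + s)^n_θ(x) - nρ)` is finite, monotone in `x`, and satisfies
`h (θ + ω) (F_θ(x) + s) ≥ h θ x + ρ`.

Now follow an orbit `(θ_n, X n)` of `F + ε` with deviations bounded above. It outruns `F + s` by
`ε - s` in each step, so `h θ_n (X n) - nρ` increases to a finite supremum, and for `d ≤ ε - s` the
increase of `h θ_n` from `X n - d` to `X n` tends to `0`. At suitable times when `θ_n` returns to
`θ_0`, this shows that `h θ_0` is nearly constant on an interval of length `d` around any prescribed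
height `t`, which is absurd for a monotone map of degree one. Since `h` need not be continuous in
`θ`, its values at `θ_n` and at `θ_0` are compared through slightly different parameters `s`.
-/

section Kronecker

open UnitAddTorus

variable {d : Type*} [Fintype d]

theorem mFourier_apply_add (k : d → ℤ) (x y : UnitAddTorus d) :
    mFourier k (x + y) = mFourier k x * mFourier k y := by
  simp only [mFourier, ContinuousMap.coe_mk, Pi.add_apply, fourier_apply, smul_add,
    AddCircle.toCircle_add, Circle.coe_mul, Finset.prod_mul_distrib]

theorem mFourier_apply_coe (k : d → ℤ) (v : d → ℝ) :
    mFourier k (fun i => (v i : UnitAddCircle)) =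
      Complex.exp (2 * Real.pi * Complex.I * ∑ i, (k i : ℂ) * v i) := by
  simp only [mFourier, ContinuousMap.coe_mk, fourier_coe_apply, ← Complex.exp_sum,
    Finset.mul_sum, Complex.ofReal_one, div_one, mul_assoc]

theorem mFourierCoeff_eq_zero_of_add_right_invariant {E : Type*} [NormedAddCommGroup E]
    [NormedSpace ℂ E] {f : UnitAddTorus d → E} {v : UnitAddTorus d} (hf : ∀ x, f (x + v) = f x)
    {k : d → ℤ} (hk : mFourier k v ≠ 1) : mFourierCoeff f k = 0 := by
  let μ : Measure (UnitAddTorus d) := .pi fun _ => AddCircle.haarAddCircle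
  have hcoeff : mFourierCoeff f k = ∫ x, mFourier (-k) x • f x ∂μ := rfl
  have hinv : mFourier (-k) v • mFourierCoeff f k = mFourierCoeff f k :=
    calc mFourier (-k) v • mFourierCoeff f k
        = ∫ x, mFourier (-k) (x + v) • f (x + v) ∂μ := by
          simp only [hcoeff, mFourier_apply_add, hf, ← integral_smul, smul_smul, mul_comm]
      _ = mFourierCoeff f k := integral_add_right_eq_self (fun x => mFourier (-k) x • f x) v
  have hk' : mFourier (-k) v ≠ 1 := by
    rwa [mFourier_neg, Ne, map_eq_one_iff _ (RingHom.injective _)]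
  have hzero : (mFourier (-k) v - 1) • mFourierCoeff f k = 0 := by
    rw [sub_smul, one_smul, hinv, sub_self]
  exact (smul_eq_zero.mp hzero).resolve_left (sub_ne_zero.mpr hk')

theorem eq_mFourierCoeff_zero_of_forall_ne {f : C(UnitAddTorus d, ℂ)}
    (hf : ∀ k ≠ 0, mFourierCoeff f k = 0) (x : UnitAddTorus d) : f x = mFourierCoeff f 0 := by
  have hsummable : Summable (mFourierCoeff f) :=
    summable_of_ne_finset_zero (s := {0}) fun k hk => hf k (by simpa using hk)
  have hsum := (hasSum_mFourier_series_apply_of_summable hsummable x).unique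
    (hasSum_single 0 fun k hk => by rw [hf k hk, zero_smul])
  simpa [mFourier_zero] using hsum

theorem dense_zmultiples_of_forall_mFourier_ne_one {v : UnitAddTorus d}
    (hv : ∀ k ≠ 0, mFourier k v ≠ 1) : Dense (AddSubgroup.zmultiples v : Set (UnitAddTorus d)) := by
  -- The distance to the subgroup is continuous and `v`-invariant, hence constant.
  let N : C(UnitAddTorus d, ℂ) :=
    ⟨fun x => (‖(x : UnitAddTorus d ⧸ AddSubgroup.zmultiples v)‖ : ℂ), by fun_prop⟩
  have hN : ∀ x, N (x + v) = N x := fun x => by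
    simp only [N, ContinuousMap.coe_mk]
    rw [QuotientAddGroup.mk_add_of_mem x (AddSubgroup.mem_zmultiples v)]
  have hconst := eq_mFourierCoeff_zero_of_forall_ne fun k hk =>
    mFourierCoeff_eq_zero_of_add_right_invariant hN (hv k hk)
  intro x
  have hx : N x = N 0 := (hconst x).trans (hconst 0).symm
  rw [← QuotientAddGroup.norm_mk_eq_zero_iff_mem_closure]
  simpa [N] using hx

theorem dense_zmultiples_coe_of_rationally_independent {v : d → ℝ}
    (hv : ∀ (k : d → ℤ) (m : ℤ), ∑ i, (k i : ℝ) * v i = m → k = 0) :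
    Dense (AddSubgroup.zmultiples (fun i => (v i : UnitAddCircle)) : Set (UnitAddTorus d)) := by
  refine dense_zmultiples_of_forall_mFourier_ne_one fun k hk hone => hk ?_
  rw [mFourier_apply_coe, Complex.exp_eq_one_iff] at hone
  obtain ⟨m, hm⟩ := hone
  have hsum : ∑ i, (k i : ℂ) * v i = m :=
    mul_left_cancel₀ Complex.two_pi_I_ne_zero (hm.trans (mul_comm _ _))
  exact hv k m (by exact_mod_cast hsum)

end Kronecker

section DegreeOneLifts

theorem circleDeg1Lift_apply_add_sub_le (f : CircleDeg1Lift) (x y : ℝ) :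
    f x + (y - x) - 1 ≤ f y := by
  have hfloor : f x + ⌊y - x⌋ ≤ f y := by
    rw [← f.map_add_int]
    exact f.mono (by linarith [Int.floor_le (y - x)])
  linarith [Int.lt_floor_add_one (y - x)]

theorem le_two_mul_of_forall_exists_lt {H : CircleDeg1Lift} {d r : ℝ}
    (h : ∀ t : ℝ, ∃ y, t - r < H (y - d) ∧ H y < t + r) : d ≤ 2 * r := by
  choose y hlower hupper using h
  have hstep (t : ℝ) : y t + d < y (t + 2 * r) := by
    have : H (y t) < H (y (t + 2 * r) - d) := by linarith [hupper t, hlower (t + 2 * r)]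
    linarith [H.monotone.reflect_lt this]
  have hchain (n : ℕ) : y 0 + n * d ≤ y (n * (2 * r)) := by
    induction n with
    | zero => simp
    | succ n ih =>
      have := hstep (n * (2 * r))
      push_cast
      rw [add_one_mul, add_one_mul]
      linarith
  by_contra! hlt
  obtain ⟨n, hn⟩ := exists_nat_gt ((r + 1 - H (y 0)) / (d - 2 * r))
  rw [div_lt_iff₀ (by linarith)] at hn
  have hgrowth : H (y 0) + n * d - 1 ≤ H (y (n * (2 * r))) := by
    linarith [circleDeg1Lift_apply_add_sub_le H (y 0) (y (n * (2 * r))), hchain n]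
  linarith [hupper (n * (2 * r))]

end DegreeOneLifts

section SkewProduct

variable {Θ : Type*}

/-- The fiber map `F^n_θ` of the `n`-th iterate of the skew product `(θ, x) ↦ (T θ, F_θ(x))`. The
fiber maps are bundled as lifts of monotone degree one circle maps, not necessarily injective. -/
def fiberIterate (T : Θ → Θ) (F : Θ → CircleDeg1Lift) : ℕ → Θ → CircleDeg1Lift
  | 0, _ => 1
  | n + 1, θ => fiberIterate T F n (T θ) * F θ

/-- The perturbed family `x ↦ F_θ(x) + s`. -/
def fiberTranslate (s : ℝ) (F : Θ → CircleDeg1Lift) (θ : Θ) : CircleDeg1Lift :=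
  CircleDeg1Lift.translate (Multiplicative.ofAdd s) * F θ

theorem fiberTranslate_apply (s : ℝ) (F : Θ → CircleDeg1Lift) (θ : Θ) (x : ℝ) :
    fiberTranslate s F θ x = F θ x + s :=
  add_comm _ _

theorem fiberTranslate_zero (F : Θ → CircleDeg1Lift) : fiberTranslate 0 F = F := by
  ext θ x
  rw [fiberTranslate_apply, add_zero]

variable {T : Θ → Θ} {F G : Θ → CircleDeg1Lift}

theorem fiberIterate_add (m n : ℕ) (θ : Θ) :
    fiberIterate T F (m + n) θ = fiberIterate T F n (T^[m] θ) * fiberIterate T F m θ := by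
  induction m generalizing θ with
  | zero => simp [fiberIterate]
  | succ m ih =>
    rw [Nat.add_right_comm m 1 n]
    simp only [fiberIterate, ih, Function.iterate_succ_apply, mul_assoc]

theorem continuous_fiberIterate [TopologicalSpace Θ] (hT : Continuous T)
    (hF : Continuous fun p : Θ × ℝ => F p.1 p.2) (n : ℕ) :
    Continuous fun p : Θ × ℝ => fiberIterate T F n p.1 p.2 := by
  induction n with
  | zero => exact continuous_snd
  | succ n ih => exact ih.comp ((hT.comp continuous_fst).prodMk hF)

section Comparison

variable [PseudoMetricSpace Θ]

/-- `F_θ ≤ G_θ'` for all sufficiently close `θ` and `θ'`. Unlike the pointwise order, this relation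
allows one to compare iterates along two different orbits of an isometry. -/
def UniformlyBelow (F G : Θ → CircleDeg1Lift) : Prop :=
  ∃ δ > 0, ∀ θ θ', dist θ θ' < δ → F θ ≤ G θ'

theorem fiberIterate_le_of_dist_lt (hT : Isometry T) {δ : ℝ}
    (hFG : ∀ θ θ', dist θ θ' < δ → F θ ≤ G θ') (n : ℕ) {θ θ' : Θ} (hθ : dist θ θ' < δ) :
    fiberIterate T F n θ ≤ fiberIterate T G n θ' := by
  induction n generalizing θ θ' with
  | zero => exact le_rfl
  | succ n ih =>
    intro x
    calc fiberIterate T F n (T θ) (F θ x)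
        ≤ fiberIterate T F n (T θ) (G θ' x) := CircleDeg1Lift.mono _ (hFG θ θ' hθ x)
      _ ≤ fiberIterate T G n (T θ') (G θ' x) := ih (by rwa [hT.dist_eq]) _

variable [CompactSpace Θ]

theorem exists_forall_dist_lt_of_continuous (hF : Continuous fun p : Θ × ℝ => F p.1 p.2) {κ : ℝ}
    (hκ : 0 < κ) : ∃ δ > 0, ∀ θ θ' x, dist θ θ' < δ → dist (F θ x) (F θ' x) < κ := by
  have hcompact : IsCompact (Set.univ ×ˢ Set.Icc (0 : ℝ) 1 : Set (Θ × ℝ)) :=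
    isCompact_univ.prod isCompact_Icc
  obtain ⟨δ, hδ, hunif⟩ := Metric.uniformContinuousOn_iff.mp
    (hcompact.uniformContinuousOn_of_continuous hF.continuousOn) κ hκ
  refine ⟨δ, hδ, fun θ θ' x hθ => ?_⟩
  have hfract : Int.fract x ∈ Set.Icc (0 : ℝ) 1 := ⟨Int.fract_nonneg x, (Int.fract_lt_one x).le⟩
  have hdist := hunif (θ, Int.fract x) ⟨trivial, hfract⟩ (θ', Int.fract x) ⟨trivial, hfract⟩
    (by simpa [Prod.dist_eq] using hθ)
  simpa only [Int.fract, CircleDeg1Lift.map_sub_int, dist_sub_right] using hdist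

theorem uniformlyBelow_fiberTranslate (hF : Continuous fun p : Θ × ℝ => F p.1 p.2) {s t : ℝ}
    (hst : s < t) : UniformlyBelow (fiberTranslate s F) (fiberTranslate t F) := by
  obtain ⟨δ, hδ, hdist⟩ := exists_forall_dist_lt_of_continuous hF (sub_pos.mpr hst)
  refine ⟨δ, hδ, fun θ θ' hθ x => ?_⟩
  have := (abs_lt.mp (hdist θ θ' x hθ)).2
  simp only [fiberTranslate_apply]
  linarith

end Comparison

theorem exists_pos_forall_add_le_of_forall_lt [TopologicalSpace Θ] [CompactSpace Θ]
    (hF : Continuous fun p : Θ × ℝ => F p.1 p.2) (hG : Continuous fun p : Θ × ℝ => G p.1 p.2)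
    (hFG : ∀ θ x, F θ x < G θ x) : ∃ ε > 0, ∀ θ x, F θ x + ε ≤ G θ x := by
  have hcompact : IsCompact (Set.univ ×ˢ Set.Icc (0 : ℝ) 1 : Set (Θ × ℝ)) :=
    isCompact_univ.prod isCompact_Icc
  obtain ⟨ε, hε, hle⟩ := hcompact.exists_forall_le' (f := fun p : Θ × ℝ => G p.1 p.2 - F p.1 p.2)
    (hG.sub hF).continuousOn fun p _ => sub_pos.mpr (hFG p.1 p.2)
  refine ⟨ε, hε, fun θ x => ?_⟩
  have := hle (θ, Int.fract x) ⟨trivial, Int.fract_nonneg x, (Int.fract_lt_one x).le⟩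
  simp only [Int.fract, CircleDeg1Lift.map_sub_int] at this
  linarith

end SkewProduct

section Deviations

variable {Θ : Type*} [TopologicalSpace Θ] [CompactSpace Θ] {T : Θ → Θ}

theorem exists_forall_le_mul_add_of_tendsto_div {u : ℕ → ℝ} {ρ : ℝ}
    (hu : Tendsto (fun n : ℕ => u n / n) atTop (𝓝 ρ)) {e : ℝ} (he : 0 < e) :
    ∃ C, ∀ n : ℕ, u n ≤ n * (ρ + e) + C := by
  have hbdd : IsBoundedUnder (· ≤ ·) atTop fun n : ℕ => u n - n * (ρ + e) := by
    refine ⟨0, eventually_map.mpr ?_⟩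
    filter_upwards [hu.eventually (gt_mem_nhds (lt_add_of_pos_right ρ he)),
      eventually_gt_atTop 0] with n hn hpos
    rw [div_lt_iff₀ (by exact_mod_cast hpos)] at hn
    linarith
  obtain ⟨C, hC⟩ := hbdd.bddAbove_range
  exact ⟨C, fun n => by linarith [hC ⟨n, rfl⟩]⟩

theorem exists_forall_le_of_tendsto_div {c : ℕ → Θ → ℝ} {D ρ : ℝ} {θ₀ : Θ}
    (hc : ∀ n, LowerSemicontinuous (c n))
    (hadd : ∀ m n θ, c m θ + c n (T^[m] θ) ≤ c (m + n) θ + D)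
    (hρ : Tendsto (fun n : ℕ => c n θ₀ / n) atTop (𝓝 ρ)) :
    ∃ θ, ∀ n : ℕ, c n θ ≤ n * ρ + (D + 1) := by
  by_contra! hexceed
  obtain ⟨N, hN⟩ : ∃ N, ∀ θ, ∃ n ≤ N, n * ρ + (D + 1) < c n θ := by
    obtain ⟨t, ht⟩ := isCompact_univ.elim_finite_subcover _
      (fun n => (hc n).isOpen_preimage (n * ρ + (D + 1)))
      fun θ _ => Set.mem_iUnion.mpr (hexceed θ)
    refine ⟨t.sup id, fun θ => ?_⟩
    obtain ⟨n, hn, hθ⟩ := Set.mem_iUnion₂.mp (ht (Set.mem_univ θ))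
    exact ⟨n, Finset.le_sup (f := id) hn, hθ⟩
  -- Concatenating excursions above the line gains `1` in every `N` steps.
  have hgain (k : ℕ) : ∃ m ≤ k * N, c 0 θ₀ + k + m * ρ ≤ c m θ₀ := by
    induction k with
    | zero => exact ⟨0, by simp, by simp⟩
    | succ k ih =>
      obtain ⟨m, hm, hk⟩ := ih
      obtain ⟨n, hn, hgt⟩ := hN (T^[m] θ₀)
      refine ⟨m + n, by rw [Nat.succ_mul]; omega, ?_⟩
      push_cast
      linarith [hadd m n θ₀]
  obtain ⟨C, hC⟩ := exists_forall_le_mul_add_of_tendsto_div hρ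
    (show (0 : ℝ) < 1 / (2 * (N + 1)) by positivity)
  obtain ⟨k, hk⟩ := exists_nat_gt (2 * (C - c 0 θ₀))
  obtain ⟨m, hm, hge⟩ := hgain k
  have hsmall : (m : ℝ) * (1 / (2 * (N + 1))) ≤ k / 2 := by
    have : (m : ℝ) ≤ k * N := by exact_mod_cast hm
    rw [mul_one_div, div_le_iff₀ (by positivity)]
    linarith [(Nat.cast_nonneg k : (0 : ℝ) ≤ k)]
  linarith [hC m]

variable {F : Θ → CircleDeg1Lift} {ρ : ℝ} {θ₀ : Θ}

theorem exists_forall_fiberIterate_le (hT : Continuous T)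
    (hF : Continuous fun p : Θ × ℝ => F p.1 p.2)
    (hρ : Tendsto (fun n : ℕ => fiberIterate T F n θ₀ 0 / n) atTop (𝓝 ρ)) :
    ∃ θ, ∀ n : ℕ, fiberIterate T F n θ 0 ≤ n * ρ + 2 := by
  obtain ⟨θ, hθ⟩ := exists_forall_le_of_tendsto_div (T := T) (D := 1)
    (c := fun n θ => fiberIterate T F n θ 0)
    (fun n => ((continuous_fiberIterate hT hF n).comp (.prodMk_left 0)).lowerSemicontinuous)
    (fun m n θ => by
      rw [fiberIterate_add, CircleDeg1Lift.mul_apply]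
      linarith [circleDeg1Lift_apply_add_sub_le (fiberIterate T F n (T^[m] θ)) 0
        (fiberIterate T F m θ 0)]) hρ
  exact ⟨θ, fun n => by linarith [hθ n]⟩

theorem exists_forall_le_fiberIterate (hT : Continuous T)
    (hF : Continuous fun p : Θ × ℝ => F p.1 p.2)
    (hρ : Tendsto (fun n : ℕ => fiberIterate T F n θ₀ 0 / n) atTop (𝓝 ρ)) :
    ∃ θ, ∀ n : ℕ, n * ρ - 2 ≤ fiberIterate T F n θ 0 := by
  obtain ⟨θ, hθ⟩ := exists_forall_le_of_tendsto_div (T := T) (D := 1) (ρ := -ρ) (θ₀ := θ₀)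
    (c := fun n θ => -fiberIterate T F n θ 0)
    (fun n => ((continuous_fiberIterate hT hF n).comp (.prodMk_left 0)).neg.lowerSemicontinuous)
    (fun m n θ => by
      rw [fiberIterate_add, CircleDeg1Lift.mul_apply]
      linarith [circleDeg1Lift_apply_add_sub_le (fiberIterate T F n (T^[m] θ))
        (fiberIterate T F m θ 0) 0])
    (by simpa only [neg_div] using hρ.neg)
  exact ⟨θ, fun n => by linarith [hθ n]⟩

end Deviations

section LowerEnvelope

variable {Θ : Type*} {T : Θ → Θ} {F G : Θ → CircleDeg1Lift} {ρ : ℝ}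

/-- Along every orbit the deviations `F^n_θ(x) - nρ` from uniform rotation are bounded below. -/
def DeviationsBddBelow (T : Θ → Θ) (F : Θ → CircleDeg1Lift) (ρ : ℝ) : Prop :=
  ∀ θ x, BddBelow (Set.range fun n : ℕ => fiberIterate T F n θ x - n * ρ)

/-- The map `h_θ(x) = inf_n (F^n_θ(x) - nρ)`, which semiconjugates the skew product to the rotation
by `ρ` up to an inequality, see `lowerEnvelope_add_le`. -/
def lowerEnvelope (hF : DeviationsBddBelow T F ρ) (θ : Θ) : CircleDeg1Lift where
  toFun x := ⨅ n : ℕ, (fiberIterate T F n θ x - n * ρ)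
  monotone' x y hxy := ciInf_mono (hF θ x) fun n => by gcongr
  map_add_one' x := by
    rw [ciInf_add (hF θ x)]
    exact iInf_congr fun n => by rw [CircleDeg1Lift.map_add_one]; ring

theorem lowerEnvelope_apply_le (hF : DeviationsBddBelow T F ρ) (θ : Θ) (x : ℝ) (n : ℕ) :
    lowerEnvelope hF θ x ≤ fiberIterate T F n θ x - n * ρ :=
  ciInf_le (hF θ x) n

theorem lowerEnvelope_apply_le_self (hF : DeviationsBddBelow T F ρ) (θ : Θ) (x : ℝ) :
    lowerEnvelope hF θ x ≤ x := by
  simpa [fiberIterate] using lowerEnvelope_apply_le hF θ x 0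

theorem lowerEnvelope_add_le (hF : DeviationsBddBelow T F ρ) (θ : Θ) (x : ℝ) :
    lowerEnvelope hF θ x + ρ ≤ lowerEnvelope hF (T θ) (F θ x) := by
  refine le_ciInf fun n => ?_
  have hsucc := lowerEnvelope_apply_le hF θ x (n + 1)
  rw [fiberIterate, CircleDeg1Lift.mul_apply] at hsucc
  push_cast at hsucc
  linarith

section Metric

variable [PseudoMetricSpace Θ]

theorem lowerEnvelope_le_of_dist_lt (hF : DeviationsBddBelow T F ρ) (hG : DeviationsBddBelow T G ρ)
    (hT : Isometry T) {δ : ℝ} (hFG : ∀ θ θ', dist θ θ' < δ → F θ ≤ G θ') {θ θ' : Θ}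
    (hθ : dist θ θ' < δ) : lowerEnvelope hF θ ≤ lowerEnvelope hG θ' := fun x =>
  ciInf_mono (hF θ x) fun n => sub_le_sub_right (fiberIterate_le_of_dist_lt hT hFG n hθ x) _

theorem deviationsBddBelow_of_uniformlyBelow (hT : Isometry T) (hFG : UniformlyBelow F G)
    {θ₀ : Θ} (hdense : Dense (Set.range fun n => T^[n] θ₀)) {C : ℝ}
    (hlower : ∀ n : ℕ, n * ρ + C ≤ fiberIterate T F n θ₀ 0) : DeviationsBddBelow T G ρ := by
  intro θ x
  obtain ⟨δ, hδ, hle⟩ := hFG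
  obtain ⟨_, ⟨k, rfl⟩, hk⟩ := hdense.exists_dist_lt θ hδ
  refine ⟨k * ρ + C + x - fiberIterate T F k θ₀ 0 - 1, ?_⟩
  rintro _ ⟨n, rfl⟩
  have hcmp := fiberIterate_le_of_dist_lt hT hle n (by rwa [dist_comm] at hk) x
  have hshift := circleDeg1Lift_apply_add_sub_le (fiberIterate T F n (T^[k] θ₀))
    (fiberIterate T F k θ₀ 0) x
  have hlow := hlower (k + n)
  rw [fiberIterate_add, CircleDeg1Lift.mul_apply] at hlow
  push_cast at hlow
  dsimp only
  linarith

end Metric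

variable {ι : Type*} [Nonempty ι] {Φ : ι → Θ → CircleDeg1Lift} {θ₀ : Θ} {X : ℕ → ℝ} {d : ℝ}

theorem lowerEnvelope_add_le_of_superorbit (hF : DeviationsBddBelow T F ρ)
    (hX : ∀ n, F (T^[n] θ₀) (X n) + d ≤ X (n + 1)) (n : ℕ) :
    lowerEnvelope hF (T^[n] θ₀) (X n) + ρ ≤
      lowerEnvelope hF (T^[n + 1] θ₀) (X (n + 1) - d) := by
  rw [Function.iterate_succ_apply']
  exact (lowerEnvelope_add_le hF _ _).trans (CircleDeg1Lift.mono _ (by linarith [hX n]))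

theorem exists_lowerEnvelope_gap_of_superorbit (hΦ : ∀ i, DeviationsBddBelow T (Φ i) ρ)
    (hd : 0 ≤ d) (hX : ∀ i n, Φ i (T^[n] θ₀) (X n) + d ≤ X (n + 1))
    (hbdd : BddAbove (Set.range fun n : ℕ => X n - n * ρ)) :
    ∃ σ : ℝ, (∀ i n, lowerEnvelope (hΦ i) (T^[n] θ₀) (X n) ≤ σ + n * ρ) ∧
      ∀ η > 0, ∃ i, ∀ᶠ n : ℕ in atTop,
        σ - η + n * ρ < lowerEnvelope (hΦ i) (T^[n] θ₀) (X n - d) := by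
  let u (p : ι × ℕ) : ℝ := lowerEnvelope (hΦ p.1) (T^[p.2] θ₀) (X p.2) - p.2 * ρ
  obtain ⟨C, hC⟩ := hbdd
  have hu : BddAbove (Set.range u) := by
    refine ⟨C, ?_⟩
    rintro _ ⟨p, rfl⟩
    exact (sub_le_sub_right (lowerEnvelope_apply_le_self _ _ _) _).trans (hC ⟨p.2, rfl⟩)
  have hstep (i : ι) (n : ℕ) :
      u (i, n) ≤ lowerEnvelope (hΦ i) (T^[n + 1] θ₀) (X (n + 1) - d) - (n + 1 : ℕ) * ρ := by
    have := lowerEnvelope_add_le_of_superorbit (hΦ i) (hX i) n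
    simp only [u]
    push_cast
    linarith
  have hmono (i : ι) : Monotone fun n => u (i, n) := monotone_nat_of_le_succ fun n =>
    (hstep i n).trans (sub_le_sub_right (CircleDeg1Lift.mono _ (by linarith)) _)
  refine ⟨⨆ p, u p, fun i n => by linarith [le_ciSup hu (i, n)], fun η hη => ?_⟩
  obtain ⟨⟨i, M⟩, hM⟩ := exists_lt_of_lt_ciSup (sub_lt_self (⨆ p, u p) hη)
  refine ⟨i, (eventually_ge_atTop (M + 1)).mono fun n hn => ?_⟩
  obtain ⟨n, rfl⟩ := Nat.exists_eq_add_of_le' (Nat.le_of_add_left_le hn)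
  linarith [hstep i n, hmono i (Nat.le_of_add_le_add_right hn)]

end LowerEnvelope

section JointMinimality

variable {Θ : Type*} [PseudoMetricSpace Θ] {T : Θ → Θ} {F G : Θ → CircleDeg1Lift} {ρ : ℝ}

/-- Minimality of the product of `T` with the rotation by `ρ`, phrased as recurrence: every point
is an `ω`-limit point of every orbit. As the second factor is homogeneous, it is enough to consider
orbits starting at second coordinate `0`. -/
def IsJointlyMinimal (T : Θ → Θ) (ρ : ℝ) : Prop :=
  ∀ θ (p : Θ × T1), MapClusterPt p atTop fun n : ℕ => (T^[n] θ, n • (ρ : T1))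

theorem IsJointlyMinimal.frequently_dist_lt_abs_lt (hT : IsJointlyMinimal T ρ) (θ θ' : Θ) (t : ℝ)
    {δ η : ℝ} (hδ : 0 < δ) (hη : 0 < η) :
    ∃ᶠ n : ℕ in atTop, dist (T^[n] θ) θ' < δ ∧ ∃ p : ℤ, |n * ρ - t - p| < η := by
  have hnhds : Metric.ball θ' δ ×ˢ Metric.ball (t : T1) η ∈ 𝓝 (θ', (t : T1)) :=
    prod_mem_nhds (Metric.ball_mem_nhds _ hδ) (Metric.ball_mem_nhds _ hη)
  refine ((hT θ (θ', t)).frequently hnhds).mono fun n hn => ⟨hn.1, round (n * ρ - t), ?_⟩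
  have hdist : dist (n • (ρ : T1)) (t : T1) < η := hn.2
  rwa [dist_eq_norm, ← AddCircle.coe_nsmul, ← AddCircle.coe_sub, UnitAddCircle.norm_eq,
    nsmul_eq_mul] at hdist

theorem IsJointlyMinimal.dense_range_iterate (hT : IsJointlyMinimal T ρ) (θ : Θ) :
    Dense (Set.range fun n => T^[n] θ) := by
  refine fun θ' => Metric.mem_closure_range_iff.mpr fun δ hδ => ?_
  obtain ⟨n, hn, -⟩ := (hT.frequently_dist_lt_abs_lt θ θ' 0 hδ one_pos).exists
  exact ⟨n, by rwa [dist_comm]⟩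

variable [CompactSpace Θ] {θ₀ : Θ}

theorem not_bddAbove_of_superorbit (hT : Isometry T) (hmin : IsJointlyMinimal T ρ)
    (hF : Continuous fun p : Θ × ℝ => F p.1 p.2)
    (hdev : ∀ s > 0, DeviationsBddBelow T (fiberTranslate s F) ρ) {X : ℕ → ℝ} {d : ℝ} (hd : 0 < d)
    (hX : ∀ n, F (T^[n] θ₀) (X n) + 2 * d ≤ X (n + 1)) :
    ¬BddAbove (Set.range fun n : ℕ => X n - n * ρ) := by
  intro hbdd
  have : Nonempty (Set.Ioo 0 d) := ⟨⟨d / 2, by simpa, by linarith⟩⟩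
  obtain ⟨σ, hupper, hlower⟩ := exists_lowerEnvelope_gap_of_superorbit
    (Φ := fun s : Set.Ioo 0 d => fiberTranslate s F) (fun s => hdev s s.2.1) hd.le
    (fun s n => by rw [fiberTranslate_apply]; linarith [hX n, s.2.2]) hbdd
  obtain ⟨⟨a, ha, had⟩, hgap⟩ := hlower (d / 8) (by positivity)
  obtain ⟨b, hab, hbd⟩ := exists_between had
  obtain ⟨c, hac, hcb⟩ := exists_between hab
  obtain ⟨δ₁, hδ₁, hle₁⟩ := uniformlyBelow_fiberTranslate hF hac
  obtain ⟨δ₂, hδ₂, hle₂⟩ := uniformlyBelow_fiberTranslate hF hcb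
  -- At returns to `θ₀` both bounds on the envelopes transfer to the single map `H`.
  let H := lowerEnvelope (hdev c (ha.trans hac)) θ₀
  suffices hflat : ∀ t, ∃ y, t - d / 4 < H (y - d) ∧ H y < t + d / 4 by
    linarith [le_two_mul_of_forall_exists_lt hflat]
  intro t
  have hreturn := hmin.frequently_dist_lt_abs_lt θ₀ θ₀ (t - σ) (lt_min hδ₁ hδ₂)
    (show 0 < d / 8 by positivity)
  obtain ⟨n, ⟨hn, p, hp⟩, hgap⟩ := (hreturn.and_eventually hgap).exists
  have hH_ge := lowerEnvelope_le_of_dist_lt (hdev a ha) (hdev c (ha.trans hac)) hT hle₁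
    (hn.trans_le (min_le_left _ _)) (X n - d)
  have hH_le := lowerEnvelope_le_of_dist_lt (hdev c (ha.trans hac)) (hdev b (ha.trans hab)) hT hle₂
    (by rw [dist_comm]; exact hn.trans_le (min_le_right _ _)) (X n)
  obtain ⟨hp_lower, hp_upper⟩ := abs_lt.mp hp
  refine ⟨X n - p, ?_, ?_⟩
  · rw [sub_right_comm, H.map_sub_int]
    linarith
  · rw [H.map_sub_int]
    linarith [hupper ⟨b, ha.trans hab, hbd⟩ n]

theorem not_tendsto_fiberIterate_of_forall_lt (hT : Isometry T) (hmin : IsJointlyMinimal T ρ)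
    (hF : Continuous fun p : Θ × ℝ => F p.1 p.2) (hG : Continuous fun p : Θ × ℝ => G p.1 p.2)
    (hFG : ∀ θ x, F θ x < G θ x) {θF θG : Θ}
    (hFρ : Tendsto (fun n : ℕ => fiberIterate T F n θF 0 / n) atTop (𝓝 ρ)) :
    ¬Tendsto (fun n : ℕ => fiberIterate T G n θG 0 / n) atTop (𝓝 ρ) := by
  intro hGρ
  obtain ⟨ε, hε, hgap⟩ := exists_pos_forall_add_le_of_forall_lt hF hG hFG
  obtain ⟨θ₁, hlower⟩ := exists_forall_le_fiberIterate hT.continuous hF hFρ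
  obtain ⟨θ₀, hupper⟩ := exists_forall_fiberIterate_le hT.continuous hG hGρ
  have hdev : ∀ s > 0, DeviationsBddBelow T (fiberTranslate s F) ρ := fun s hs =>
    deviationsBddBelow_of_uniformlyBelow hT
      (by simpa only [fiberTranslate_zero] using uniformlyBelow_fiberTranslate hF hs)
      (hmin.dense_range_iterate θ₁) hlower
  have hsuper (n : ℕ) : F (T^[n] θ₀) (fiberIterate T G n θ₀ 0) + 2 * (ε / 2) ≤
      fiberIterate T G (n + 1) θ₀ 0 := by
    rw [fiberIterate_add n 1, mul_div_cancel₀ ε two_ne_zero]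
    exact hgap _ _
  refine not_bddAbove_of_superorbit hT hmin hF hdev (half_pos hε) hsuper ⟨2, ?_⟩
  rintro _ ⟨n, rfl⟩
  exact sub_le_iff_le_add'.mpr (hupper n)

end JointMinimality

section QuasiperiodicForcing

theorem coe_fiberIterate (ω : ℝ) (F : T1 → CircleDeg1Lift) (n : ℕ) (θ : T1) :
    ⇑(fiberIterate (· + (ω : T1)) F n θ) = fiberIter ω (fun θ => F θ) n θ := by
  induction n generalizing θ with
  | zero => rfl
  | succ n ih => exact funext fun x => congrFun (ih _) (F θ x)

theorem isJointlyMinimal_add_right_of_rationally_independent {ω ρ : ℝ}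
    (h : ∀ a b c : ℤ, (a : ℝ) * ω + b * ρ + c = 0 → a = 0 ∧ b = 0 ∧ c = 0) :
    IsJointlyMinimal (· + (ω : T1)) ρ := by
  have hdense := dense_zmultiples_coe_of_rationally_independent (v := ![ω, ρ]) fun k m hkm => by
    rw [Fin.sum_univ_two] at hkm
    obtain ⟨h₀, h₁, -⟩ := h (k 0) (k 1) (-m) (by simpa [sub_eq_zero, ← sub_eq_add_neg] using hkm)
    ext i
    fin_cases i <;> assumption
  intro θ p
  have hcluster : MapClusterPt ![p.1 - θ, p.2] atTop fun n : ℕ =>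
      n • fun i => ((![ω, ρ] i : ℝ) : UnitAddCircle) :=
    mapClusterPt_atTop_nsmul_iff_mem_topologicalClosure_zmultiples.mpr (hdense _)
  have hmap : Continuous fun x : UnitAddTorus (Fin 2) => (θ + x 0, x 1) := by fun_prop
  simpa [Function.comp_def, add_right_iterate] using hcluster.continuousAt_comp hmap.continuousAt

theorem HasRotNum.tendsto_fiberIterate {ω ρ : ℝ} {F : T1 → CircleDeg1Lift}
    (hF : HasRotNum ω (fun θ => F θ) ρ) (θ : T1) :
    Tendsto (fun n : ℕ => fiberIterate (· + (ω : T1)) F n θ 0 / n) atTop (𝓝 ρ) := by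
  simpa only [coe_fiberIterate, sub_zero] using hF θ 0

theorem one_sided_locking_rationally_dependent_general {ω ρ : ℝ} {F G : T1 → CircleDeg1Lift}
    (hF : Continuous fun p : T1 × ℝ => F p.1 p.2) (hG : Continuous fun p : T1 × ℝ => G p.1 p.2)
    (hFG : ∀ θ x, F θ x < G θ x)
    (hFρ : HasRotNum ω (fun θ => F θ) ρ) (hGρ : HasRotNum ω (fun θ => G θ) ρ) :
    ∃ a b c : ℤ, ¬(a = 0 ∧ b = 0 ∧ c = 0) ∧ (a : ℝ) * ω + (b : ℝ) * ρ + (c : ℝ) = 0 := by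
  by_contra hindep
  have hmin : IsJointlyMinimal (· + (ω : T1)) ρ :=
    isJointlyMinimal_add_right_of_rationally_independent fun a b c habc =>
      by_contra fun hne => hindep ⟨a, b, c, hne, habc⟩
  exact not_tendsto_fiberIterate_of_forall_lt (isometry_add_right _) hmin hF hG hFG
    (hFρ.tendsto_fiberIterate 0) (hGρ.tendsto_fiberIterate 0)

/-- The fiber maps of a qpf lift, bundled as lifts of degree one circle maps. -/
def IsQpfLift.fiberLift {ω : ℝ} {F : T1 → ℝ → ℝ} (hF : IsQpfLift ω F) (θ : T1) : CircleDeg1Lift :=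
  ⟨⟨F θ, (hF.mono θ).monotone⟩, hF.per θ⟩

theorem IsQpfLift.add_const {ω : ℝ} {F : T1 → ℝ → ℝ} (hF : IsQpfLift ω F) (ε : ℝ) :
    IsQpfLift ω fun θ x => F θ x + ε where
  cont := hF.cont.add_const ε
  mono θ := (hF.mono θ).add_const ε
  surj θ := (add_right_surjective ε).comp (hF.surj θ)
  per θ x := by rw [hF.per, add_right_comm]

end QuasiperiodicForcing

/-- Theorem A, contrapositive form: if the fibered rotation number is
locked on one side (some nontrivial perturbation has the same rotation number), then
`ω`, `ρ` and `1` are rationally dependent. -/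
theorem one_sided_locking_rationally_dependent
    (ω : ℝ) (hω : Irrational ω)
    (F : T1 → ℝ → ℝ) (hF : IsQpfLift ω F)
    (ρ : ℝ) (hρ : HasRotNum ω F ρ)
    (hlock : ∃ ε : ℝ, ε ≠ 0 ∧ HasRotNum ω (fun θ x => F θ x + ε) ρ) :
    ∃ a b c : ℤ, ¬(a = 0 ∧ b = 0 ∧ c = 0) ∧ (a : ℝ) * ω + (b : ℝ) * ρ + (c : ℝ) = 0 := by
  obtain ⟨ε, hε, hρε⟩ := hlock
  rcases hε.lt_or_gt with hneg | hpos
  · exact one_sided_locking_rationally_dependent_general (F := (hF.add_const ε).fiberLift)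
      (G := hF.fiberLift) (hF.add_const ε).cont hF.cont
      (fun _ _ => add_lt_of_neg_right _ hneg) hρε hρ
  · exact one_sided_locking_rationally_dependent_general (F := hF.fiberLift)
      (G := (hF.add_const ε).fiberLift) hF.cont (hF.add_const ε).cont
      (fun _ _ => lt_add_of_pos_right _ hpos) hρ hρε
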